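/- Let b ≥ 2 be an integer. There exist a positive real constant C (depending only on b) and a real n₀ such that for every integer n ≥ n₀ there is a positive integer m with m > C · log n · log log log n and with b^m − 1 dividing Λ_n, the least common multiple of 1, 2, …, n. -/

import Mathlib

lemma aux_coprime_case (b m p a : ℕ) (hb : 2 ≤ b) (hm : 0 < m) (hp : p.Prime) (hpm : ¬ p ∣ m)
    (h : p ^ a ∣ b ^ m - 1) : p ^ a ≤ (b + 1) ^ Nat.totient m := by
  classical
  have : Fact p.Prime := ⟨hp⟩
  rcases Nat.eq_zero_or_pos a with rfl | ha
  · simpa using Nat.one_le_pow _ _ (by omega)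
  have hbm : 1 ≤ b ^ m := Nat.one_le_pow _ _ (by omega)
  set f : ℕ → ℤ := fun d => (Polynomial.cyclotomic d ℤ).eval (b : ℤ) with hf
  have hprod : ∏ d ∈ m.divisors, f d = (b : ℤ) ^ m - 1 := by
    rw [hf, ← Polynomial.eval_prod, Polynomial.prod_cyclotomic_eq_X_pow_sub_one hm]
    simp
  have hZ : ((p : ℤ) ^ a) ∣ (b : ℤ) ^ m - 1 := by
    have := Int.natCast_dvd_natCast.mpr h
    push_cast [hbm] at this
    exact this
  have hpZ : (p : ℤ) ∣ (b : ℤ) ^ m - 1 := (dvd_pow_self _ ha.ne').trans hZ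
  have hone : (b : ZMod p) ^ m = 1 := by
    have := (ZMod.intCast_zmod_eq_zero_iff_dvd _ p).mpr hpZ
    push_cast at this
    exact sub_eq_zero.mp this
  set d0 := orderOf (b : ZMod p) with hd0
  have hd0m : d0 ∈ m.divisors := Nat.mem_divisors.mpr ⟨orderOf_dvd_of_pow_eq_one hone, hm.ne'⟩
  have hother : ∀ d ∈ m.divisors, d ≠ d0 → ¬ (p : ℤ) ∣ f d := by
    intro d hd hne hdvd
    have hdm := (Nat.mem_divisors.mp hd).1
    have hpd : ¬ p ∣ d := fun h' => hpm (h'.trans hdm)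
    have : NeZero (d : ZMod p) := ⟨fun h0 => hpd ((ZMod.natCast_eq_zero_iff _ _).mp h0)⟩
    have h0 := (ZMod.intCast_zmod_eq_zero_iff_dvd _ p).mpr hdvd
    have hroot : (Polynomial.cyclotomic d (ZMod p)).IsRoot (b : ZMod p) := by
      rw [Polynomial.IsRoot, ← Polynomial.map_cyclotomic_int, Polynomial.eval_natCast_map]
      exact h0
    exact hne (Polynomial.isRoot_cyclotomic_iff.mp hroot).eq_orderOf
  have hdv : (p : ℤ) ^ a ∣ f d0 := by
    rw [← hprod, ← Finset.mul_prod_erase _ _ hd0m] at hZ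
    refine IsCoprime.dvd_of_dvd_mul_right ?_ hZ
    refine IsCoprime.prod_right fun d hd => ?_
    refine IsCoprime.pow_left ?_
    have hd' := Finset.mem_erase.mp hd
    exact ((Nat.prime_iff_prime_int.mp hp).coprime_iff_not_dvd).mpr (hother d hd'.2 hd'.1)
  have hb1 : (1 : ℝ) < (b : ℝ) := by exact_mod_cast hb
  have hcast : ((f d0 : ℤ) : ℝ) = (Polynomial.cyclotomic d0 ℝ).eval (b : ℝ) := by
    rw [← Polynomial.map_cyclotomic_int d0 ℝ, Polynomial.eval_natCast_map]
    rfl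
  have hpos : 0 < f d0 := by
    have := Polynomial.cyclotomic_pos' d0 hb1
    rw [← hcast] at this
    exact_mod_cast this
  have hle : (p : ℤ) ^ a ≤ f d0 := Int.le_of_dvd hpos hdv
  have h2 : ((f d0 : ℤ) : ℝ) ≤ ((b : ℝ) + 1) ^ Nat.totient d0 := by
    rw [hcast]; exact Polynomial.cyclotomic_eval_le_add_one_pow_totient hb1 d0
  have h3 : f d0 ≤ ((b : ℤ) + 1) ^ Nat.totient d0 := by exact_mod_cast h2
  have h4 : p ^ a ≤ (b + 1) ^ Nat.totient d0 := by exact_mod_cast hle.trans h3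
  refine h4.trans (Nat.pow_le_pow_right (by omega) ?_)
  exact Nat.le_of_dvd (Nat.totient_pos.mpr hm)
    (Nat.totient_dvd_of_dvd (Nat.mem_divisors.mp hd0m).1)

lemma aux_prime_pow (b m p a : ℕ) (hb : 2 ≤ b) (hm : 0 < m) (hp : p.Prime)
    (h : p ^ a ∣ b ^ m - 1) : p ^ a ≤ (b + 1) ^ (Nat.totient m + 2) * m := by
  have : Fact p.Prime := ⟨hp⟩
  have hmono : (b + 1) ^ Nat.totient m ≤ (b + 1) ^ (Nat.totient m + 2) :=
    Nat.pow_le_pow_right (by omega) (by omega)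
  by_cases hpm : p ∣ m
  swap
  · have := aux_coprime_case b m p a hb hm hp hpm h
    exact (this.trans hmono).trans (Nat.le_mul_of_pos_right _ hm)
  have hbm : b < b ^ m ∨ m = 1 := by
    rcases Nat.lt_or_ge 1 m with h1 | h1
    · exact Or.inl (by simpa using Nat.pow_lt_pow_right (by omega : 1 < b) h1)
    · right; omega
  have hbm0 : b ^ m - 1 ≠ 0 := by
    have : b ≤ b ^ m := Nat.le_self_pow hm.ne' b
    omega
  have hav : a ≤ padicValNat p (b ^ m - 1) := (padicValNat_dvd_iff_le hbm0).mp h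
  rcases Nat.eq_zero_or_pos a with rfl | ha
  · exact Nat.mul_pos (Nat.pow_pos (by omega : 0 < b + 1)) hm
  have hpb1 : p ∣ b ^ m - 1 := (dvd_pow_self _ ha.ne').trans h
  have hpb : ¬ p ∣ b := by
    intro hh
    have h1 : p ∣ b ^ m := hh.trans (dvd_pow_self _ hm.ne')
    have h2 := (Nat.dvd_sub_iff_right (Nat.one_le_pow _ _ (by omega)) h1).mp hpb1
    exact hp.one_lt.ne' (Nat.dvd_one.mp h2)
  have pv : ∀ x : ℕ, 0 < x → p ^ padicValNat p x ≤ x := fun x hx =>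
    Nat.le_of_dvd hx pow_padicValNat_dvd
  rcases hp.eq_two_or_odd' with rfl | hodd
  · have := padicValNat.pow_two_sub_pow (x := b) (y := 1) (by omega) (by omega) hpb hm.ne'
      (even_iff_two_dvd.mpr hpm)
    rw [one_pow] at this
    calc 2 ^ a ≤ 2 ^ (padicValNat 2 (b + 1) + padicValNat 2 (b - 1) + padicValNat 2 m) :=
          Nat.pow_le_pow_right (by omega) (by omega)
      _ = 2 ^ (padicValNat 2 (b + 1)) * 2 ^ (padicValNat 2 (b - 1)) * 2 ^ (padicValNat 2 m) := by
          rw [pow_add, pow_add]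
      _ ≤ (b + 1) * (b - 1) * m := by
          gcongr
          · exact pv _ (by omega)
          · exact pv _ (by omega)
          · exact pv _ hm
      _ ≤ (b + 1) * (b + 1) * m := by gcongr; omega
      _ = (b + 1) ^ 2 * m := by ring
      _ ≤ _ := by
          gcongr
          · omega
          · omega
  · obtain ⟨k, m', hm', hmeq⟩ := Nat.exists_eq_pow_mul_and_not_dvd hm.ne' p hp.ne_one
    have hm'0 : 0 < m' := by
      rcases Nat.eq_zero_or_pos m' with rfl | h0
      · simp at hm'
      · exact h0
    have hb1 : 1 ≤ b ^ m' := Nat.one_le_pow _ _ (by omega)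
    have hbb : b ≤ b ^ m' := Nat.le_self_pow hm'0.ne' b
    have hpow : b ^ m = (b ^ m') ^ (p ^ k) := by rw [hmeq, ← pow_mul, mul_comm]
    have hdiv : p ∣ b ^ m' - 1 := by
      have h1 : ((b ^ m - 1 : ℕ) : ZMod p) = 0 := (ZMod.natCast_eq_zero_iff _ _).mpr hpb1
      rw [← ZMod.natCast_eq_zero_iff]
      rw [Nat.cast_sub (Nat.one_le_pow _ _ (by omega)), hpow] at h1
      rw [Nat.cast_sub hb1]
      push_cast at h1 ⊢
      rwa [ZMod.pow_card_pow] at h1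
    have key := padicValNat.pow_sub_pow (p := p) (x := b ^ m') (y := 1) hodd (by omega) hdiv
      (fun hh => hpb (hp.dvd_of_dvd_pow hh)) (n := p ^ k) (pow_ne_zero _ hp.ne_zero)
    rw [one_pow, ← hpow, padicValNat.prime_pow] at key
    have hc := aux_coprime_case b m' p _ hb hm'0 hp hm'
      (pow_padicValNat_dvd (p := p) (n := b ^ m' - 1))
    have htot : Nat.totient m' ≤ Nat.totient m :=
      Nat.le_of_dvd (Nat.totient_pos.mpr hm) (Nat.totient_dvd_of_dvd ⟨p ^ k, by rw [hmeq, mul_comm]⟩)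
    calc p ^ a ≤ p ^ (padicValNat p (b ^ m' - 1) + k) :=
          Nat.pow_le_pow_right hp.pos (by omega)
      _ = p ^ padicValNat p (b ^ m' - 1) * p ^ k := pow_add _ _ _
      _ ≤ (b + 1) ^ Nat.totient m' * m := by
          gcongr
          exact Nat.le_of_dvd hm ⟨m', hmeq⟩
      _ ≤ _ := by
          gcongr
          · omega
          · omega

lemma aux_dvd (b m n : ℕ) (hb : 2 ≤ b) (hm : 0 < m)
    (h : (b + 1) ^ (Nat.totient m + 2) * m ≤ n) : b ^ m - 1 ∣ (Finset.Icc 1 n).lcm id := by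
  rw [Nat.dvd_iff_prime_pow_dvd_dvd]
  intro p a hp hd
  have := aux_prime_pow b m p a hb hm hp hd
  exact Finset.dvd_lcm (f := id) (Finset.mem_Icc.mpr ⟨Nat.one_le_pow _ _ hp.pos, this.trans h⟩)

lemma aux_mertens (y : ℕ) :
    Real.log ((y : ℝ) + 1) * (Nat.totient (primorial y) : ℝ) ≤ (primorial y : ℝ) := by
  let f : ℕ →* ℝ :=
    { toFun := fun n => (n : ℝ)⁻¹
      map_one' := by simp
      map_mul' := by intro a b; push_cast; rw [mul_inv] }
  have hfv : ∀ n : ℕ, f n = (n : ℝ)⁻¹ := fun n => rfl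
  have hsum := (EulerProduct.summable_and_hasSum_smoothNumbers_prod_primesBelow_geometric
    (f := f) (by
      intro p hp
      rw [hfv, norm_inv, Real.norm_natCast]
      exact inv_lt_one_of_one_lt₀ (by exact_mod_cast hp.one_lt)) (y + 1)).2
  have hH : ((harmonic y : ℚ) : ℝ) ≤ ∏ p ∈ (y + 1).primesBelow, (1 - f p)⁻¹ := by
    have hmem : ∀ i ∈ Finset.Icc 1 y, i ∈ (y + 1).smoothNumbers := fun i hi => by
      have := Finset.mem_Icc.mp hi
      exact Nat.mem_smoothNumbers_of_lt (by omega) (by omega)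
    let g : {i // i ∈ Finset.Icc 1 y} ↪ (y + 1).smoothNumbers := ⟨fun i => (⟨i.1, hmem i.1 i.2⟩ : (y + 1).smoothNumbers), fun i j hij => Subtype.ext (congrArg (fun z : (y + 1).smoothNumbers => (z : ℕ)) hij)⟩
    have := sum_le_hasSum ((Finset.Icc 1 y).attach.map g) (fun i _ => by rw [hfv]; positivity) hsum
    rw [Finset.sum_map] at this
    have this := (Finset.sum_attach (Finset.Icc 1 y) (fun i => f i)).symm.le.trans this
    rw [harmonic_eq_sum_Icc]
    push_cast
    exact this
  have hlog : Real.log ((y : ℝ) + 1) ≤ ((harmonic y : ℚ) : ℝ) := by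
    simpa using log_add_one_le_harmonic y
  have hpf : (primorial y).primeFactors = (y + 1).primesBelow := by
    rw [primeFactors_primorial]; rfl
  have htot : (Nat.totient (primorial y) : ℝ)
      = (primorial y : ℝ) * ∏ p ∈ (y + 1).primesBelow, (1 - f p) := by
    have := Nat.totient_eq_mul_prod_factors (primorial y)
    rw [hpf] at this
    have h2 := congrArg (fun q : ℚ => (q : ℝ)) this
    push_cast at h2
    exact h2
  have hpos : 0 < ∏ p ∈ (y + 1).primesBelow, (1 - f p) := by
    refine Finset.prod_pos fun p hp => ?_
    rw [hfv, sub_pos]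
    exact inv_lt_one_of_one_lt₀ (by exact_mod_cast (Nat.prime_of_mem_primesBelow hp).one_lt)
  rw [Finset.prod_inv_distrib] at hH
  have h5 := hlog.trans hH
  rw [htot]
  have : Real.log ((y : ℝ) + 1) * ∏ p ∈ (y + 1).primesBelow, (1 - f p) ≤ 1 := by
    calc _ ≤ (∏ p ∈ (y + 1).primesBelow, (1 - f p))⁻¹ * ∏ p ∈ (y + 1).primesBelow, (1 - f p) := by
          gcongr
      _ = 1 := inv_mul_cancel₀ hpos.ne'
  have hP : (0 : ℝ) ≤ (primorial y : ℝ) := by positivity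
  nlinarith

lemma aux_totient (P k : ℕ) : Nat.totient (P * k) ≤ Nat.totient P * k := by
  induction k using induction_on_primes with
  | zero => simp
  | one => simp
  | prime_mul p a hp ih =>
    have h1 : Nat.totient (p * (P * a)) ≤ p * Nat.totient (P * a) := by
      by_cases hd : p ∣ P * a
      · rw [Nat.totient_mul_of_prime_of_dvd hp hd]
      · rw [Nat.totient_mul_of_prime_of_not_dvd hp hd]
        exact Nat.mul_le_mul_right _ (Nat.sub_le _ _)
    calc Nat.totient (P * (p * a)) = Nat.totient (p * (P * a)) := by rw [Nat.mul_left_comm]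
      _ ≤ p * Nat.totient (P * a) := h1
      _ ≤ p * (Nat.totient P * a) := Nat.mul_le_mul_left _ ih
      _ = Nat.totient P * (p * a) := by ring

lemma aux_choose (X : ℝ) (hX : 1 ≤ X) : ∃ m : ℕ, 0 < m ∧ (Nat.totient m : ℝ) ≤ X ∧
    (m : ℝ) ≤ X ^ 2 ∧ X / 2 * Real.log (Real.log X / 2) ≤ m := by
  set y := ⌊Real.log X / 2⌋₊ with hy
  set P := primorial y with hP
  have hX0 : 0 < X := by linarith
  have hl0 : 0 ≤ Real.log X := Real.log_nonneg hX
  have hyle : (y : ℝ) ≤ Real.log X / 2 := Nat.floor_le (by positivity)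
  have hPX : (P : ℝ) ≤ X := by
    have h1 : (P : ℝ) ≤ 4 ^ y := by exact_mod_cast primorial_le_four_pow y
    have h4 : (4 : ℝ) ≤ Real.exp 2 := by
      have := Real.add_one_le_exp (1 : ℝ)
      have h2 : Real.exp 2 = Real.exp 1 * Real.exp 1 := by rw [← Real.exp_add]; norm_num
      nlinarith
    calc (P : ℝ) ≤ 4 ^ y := h1
      _ ≤ (Real.exp 2) ^ y := by gcongr
      _ = Real.exp (y * 2) := by rw [← Real.exp_nat_mul]
      _ ≤ Real.exp (Real.log X) := Real.exp_le_exp.mpr (by linarith)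
      _ = X := Real.exp_log hX0
  have hP0 : 0 < P := primorial_pos y
  have hφ0 : 0 < Nat.totient P := Nat.totient_pos.mpr hP0
  have hφ0' : (0 : ℝ) < Nat.totient P := by exact_mod_cast hφ0
  have hφ1' : (1 : ℝ) ≤ Nat.totient P := by exact_mod_cast hφ0
  have hφP : (Nat.totient P : ℝ) ≤ P := by exact_mod_cast Nat.totient_le P
  set k := ⌊X / Nat.totient P⌋₊ with hk
  have hr1 : 1 ≤ X / Nat.totient P := by rw [one_le_div hφ0']; linarith
  have hkle : (k : ℝ) ≤ X / Nat.totient P := Nat.floor_le (by positivity)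
  have hk1 : 1 ≤ k := Nat.le_floor (by simpa using hr1)
  have hk1' : (1 : ℝ) ≤ k := by exact_mod_cast hk1
  have hkge : X / Nat.totient P ≤ 2 * k := by
    have := Nat.lt_floor_add_one (X / Nat.totient P)
    linarith
  have hkφ : (k : ℝ) * Nat.totient P ≤ X := (le_div_iff₀ hφ0').mp hkle
  refine ⟨P * k, by positivity, ?_, ?_, ?_⟩
  · have : Nat.totient (P * k) ≤ Nat.totient P * k := aux_totient P k
    calc ((Nat.totient (P * k) : ℕ) : ℝ) ≤ Nat.totient P * k := by exact_mod_cast this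
      _ ≤ X := by linarith
  · push_cast
    have : (k : ℝ) ≤ X := by nlinarith
    nlinarith
  · push_cast
    have hM := aux_mertens y
    have h1 : Real.log (Real.log X / 2) ≤ Real.log ((y : ℝ) + 1) := by
      rcases hl0.eq_or_lt with h0 | h0
      · rw [← h0]; simp only [zero_div, Real.log_zero]; apply Real.log_nonneg; linarith [Nat.cast_nonneg (α := ℝ) y]
      · apply Real.log_le_log (by positivity)
        exact (Nat.lt_floor_add_one _).le
    have hly : 0 ≤ Real.log ((y : ℝ) + 1) := Real.log_nonneg (by linarith [Nat.cast_nonneg (α := ℝ) y])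
    rw [div_le_iff₀ hφ0'] at hkge
    calc X / 2 * Real.log (Real.log X / 2) ≤ X / 2 * Real.log ((y : ℝ) + 1) := by gcongr
      _ ≤ (k * Nat.totient P) * Real.log ((y : ℝ) + 1) := by gcongr; linarith
      _ = (Real.log ((y : ℝ) + 1) * Nat.totient P) * k := by ring
      _ ≤ P * k := by gcongr

lemma aux_eventually (A : ℝ) (hA : 0 < A) : ∀ᶠ L : ℝ in Filter.atTop,
    1 ≤ L / (2 * A) ∧ 2 * A + 2 * Real.log (L / (2 * A)) ≤ L / 2 ∧
    0 < Real.log (Real.log L) ∧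
    Real.log (Real.log L) / 2 ≤ Real.log (Real.log (L / (2 * A)) / 2) := by
  have hX : Filter.Tendsto (fun L : ℝ => L / (2 * A)) Filter.atTop Filter.atTop :=
    Filter.tendsto_id.atTop_div_const (by positivity)
  have hlog2 := Real.tendsto_log_atTop.comp Real.tendsto_log_atTop
  have e1 := hX.eventually_ge_atTop 1
  have e2 : ∀ᶠ X : ℝ in Filter.atTop, Real.log X ≤ (A / 4) * X := by
    have := Real.isLittleO_log_id_atTop.bound (show (0 : ℝ) < A / 4 by positivity)
    filter_upwards [this, Filter.eventually_ge_atTop 0] with X h1 h2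
    rw [Real.norm_eq_abs, id, Real.norm_eq_abs, abs_of_nonneg h2] at h1
    exact (le_abs_self _).trans h1
  have e2' := hX.eventually e2
  have e3 := hlog2.eventually_gt_atTop 0
  have e4 := Real.tendsto_log_atTop.eventually_ge_atTop (2 * |Real.log (2 * A)| + 16)
  filter_upwards [e1, e2', e3, e4, Filter.eventually_ge_atTop (8 * A), Filter.eventually_gt_atTop 0]
    with L h1 h2 h3 h4 h5 h6
  refine ⟨h1, ?_, h3, ?_⟩
  · have : A / 4 * (L / (2 * A)) = L / 8 := by field_simp; norm_num
    linarith
  · have hl : 16 ≤ Real.log L := by linarith [abs_nonneg (Real.log (2 * A))]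
    rw [← Real.log_sqrt (by linarith), Real.log_div h6.ne' (by positivity)]
    have hs : 4 ≤ √(Real.log L) := Real.le_sqrt_of_sq_le (by linarith)
    apply Real.log_le_log (by linarith)
    have hsq := Real.mul_self_sqrt (show 0 ≤ Real.log L by linarith)
    have := le_abs_self (Real.log (2 * A))
    nlinarith

theorem exists_pow_sub_one_dvd_lcm (b : ℕ) (hb : 2 ≤ b) :
    ∃ C : ℝ, 0 < C ∧ ∃ n₀ : ℝ, ∀ n : ℕ, n₀ ≤ (n : ℝ) →
      ∃ m : ℕ, 0 < m ∧
        C * Real.log n * Real.log (Real.log (Real.log n)) < (m : ℝ) ∧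
        b ^ m - 1 ∣ (Finset.Icc 1 n).lcm id := by
  set A := Real.log ((b : ℝ) + 1) with hA
  have hb' : (2 : ℝ) ≤ b := by exact_mod_cast hb
  have hA0 : 0 < A := Real.log_pos (by linarith)
  refine ⟨1 / (16 * A), by positivity, ?_⟩
  have ev := (Real.tendsto_log_atTop.eventually (aux_eventually A hA0)).and
    (Filter.eventually_gt_atTop 0)
  obtain ⟨n₀, hn₀⟩ := Filter.eventually_atTop.mp ev
  refine ⟨n₀, fun n hn => ?_⟩
  obtain ⟨⟨h1, h2, h3, h4⟩, hn0⟩ := hn₀ n hn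
  set L := Real.log n with hL
  set X := L / (2 * A) with hX
  obtain ⟨m, hm, hφ, hmX, hmge⟩ := aux_choose X h1
  have hm' : (0 : ℝ) < m := by exact_mod_cast hm
  have hLX : L = 2 * A * X := by rw [hX]; field_simp
  refine ⟨m, hm, ?_, aux_dvd b m n hb hm ?_⟩
  · calc 1 / (16 * A) * L * Real.log (Real.log L) = X / 8 * Real.log (Real.log L) := by
          rw [hX]; field_simp; ring
      _ < X / 2 * (Real.log (Real.log L) / 2) := by nlinarith
      _ ≤ X / 2 * Real.log (Real.log X / 2) := by gcongr
      _ ≤ m := hmge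
  · have : ((b : ℝ) + 1) ^ (Nat.totient m + 2) * m ≤ n := by
      rw [← Real.log_le_log_iff (by positivity) hn0, Real.log_mul (by positivity) hm'.ne',
        Real.log_pow]
      have hlm : Real.log m ≤ 2 * Real.log X := by
        have := Real.log_le_log hm' hmX
        rwa [Real.log_pow] at this
      push_cast
      rw [← hA, ← hL]
      have : (Nat.totient m : ℝ) * A ≤ X * A := by gcongr
      nlinarith
    exact_mod_cast this
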